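/- Assume λ, α, θ > 0, β + θ < 1, (H2), m_τ, K_τ > 0 and 0 < τ < 1. Let (X, ρ) be a minimizer of J_{(X⁰,ρ⁰)} over 𝒜 with X ≥ X⁰, and let ρ̄ be the continuous representative of ρ on [0,X]. Then the free interface satisfies the Euler–Lagrange equation λ (X − X⁰)/τ = α − (1 − ρ̄(X)) − ln ρ̄(X). -/

import Mathlib

/-!
The equation comes from a test of minimality that moves the interface and changes the
density only in a small window next to it. For `s > -1` and small `ε > 0`, let the interface move
from `X` to `X + s ε` and replace `ρ` on `(X - ε, X + s ε)` by the constant that preserves `𝐌`.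
Then `M(·, ρ⁰)` is unchanged, and with it the boundary term and the penalty.

* The transport term rises by `O(ε²)` only: mass `O(ε)` is rearranged over a distance `O(ε)`
  (`optCost_window`, by an arbitrary coupling of the window mass with its former targets).
* The interval `(0, Λ)` on which the marginals live depends on the competitor. Enlarging it adds
  the same Lebesgue measure to both marginals, to the right of everything else, and the optimal
  cost does not see such a common part (`optCost_add_le`, `optCost_le_add`). Together these give
  `W2sq_window`.

Dividing by `ε` and letting `ε → 0` (`variation`, `limit_variation`) yields, with `r = ρ̄(X)` and
`A = λ (X - X⁰)/τ - α`,
`0 ≤ s A + (1 + s) f((r + s)/(1 + s)) - f(r)` whenever `s > -1` and `r + s > 0`.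
If `r = 0`, the right-hand side behaves like `s ln s + s A`, which is negative for small `s > 0`;
hence `r > 0`. Then the right-hand side vanishes at the interior point `s = 0`, so its derivative
there, `A + ln r + 1 - r`, is zero (`stationary_of_limit`).
-/

open MeasureTheory Real Set ENNReal Filter Topology

noncomputable section

/-- The threshold `ρ₋ = exp(β - θ - 1)`. -/
def rhoMinus (β θ : ℝ) : ℝ := Real.exp (β - θ - 1)

/-- The threshold `ρ₊ = exp(β + θ - 1)`. -/
def rhoPlus (β θ : ℝ) : ℝ := Real.exp (β + θ - 1)

/-- Membership in the class `𝔸` of admissible densities on `ℝ₊`: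
nonnegative a.e., locally integrable together with `ρ ln ρ`, and `≡ 1` a.e. eventually. -/
def MemAdm (ρ : ℝ → ℝ) : Prop :=
  (∀ᵐ x : ℝ, 0 < x → 0 ≤ ρ x) ∧
  LocallyIntegrableOn ρ (Ioi 0) volume ∧
  LocallyIntegrableOn (fun x => ρ x * Real.log (ρ x)) (Ioi 0) volume ∧
  ∃ x : ℝ, 0 < x ∧ (∀ᵐ y : ℝ, y ∈ Ioi x → ρ y = 1)

/-- `x_ρ`, the infimum of the points after which `ρ ≡ 1` a.e. -/
def xA (ρ : ℝ → ℝ) : ℝ :=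
  sInf {x : ℝ | 0 < x ∧ ∀ᵐ y : ℝ, y ∈ Ioi x → ρ y = 1}

/-- Membership of a pair `(X, ρ)` in the admissible set `𝒜`. -/
def MemAdmSet (X : ℝ) (ρ : ℝ → ℝ) : Prop := MemAdm ρ ∧ xA ρ ≤ X

/-- `𝐌(ρ) = -∫_{ℝ₊} (1 - ρ)`. -/
def Mfun (ρ : ℝ → ℝ) : ℝ := -∫ x in Ioi (0:ℝ), (1 - ρ x)

/-- `M(ρ, ρ̃) = 𝐌(ρ) - 𝐌(ρ̃)`. -/
def Mdiff (ρ ρt : ℝ → ℝ) : ℝ := Mfun ρ - Mfun ρt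

/-- `f(r) = r (ln r - β) + β`. -/
def fEnt (β r : ℝ) : ℝ := r * (Real.log r - β) + β

/-- The measure `ν(ρ, ρ̃) = ρ · Leb⌊(0,Λ) + (M(ρ̃,ρ))₊ δ₀`, `Λ = max(x_ρ, x_ρ̃)`. -/
def nuMeas (ρ ρt : ℝ → ℝ) : Measure ℝ :=
  (volume.withDensity (fun x => ENNReal.ofReal (ρ x))).restrict
      (Ioo 0 (max (xA ρ) (xA ρt)))
    + (ENNReal.ofReal (Mdiff ρt ρ)) • Measure.dirac 0

/-- The squared Wasserstein distance `𝐖₂²(ρ, ρ̃)`: infimum of the quadratic transport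
cost over couplings of `ν(ρ,ρ̃)` and `ν(ρ̃,ρ)`. -/
def W2sq (ρ ρt : ℝ → ℝ) : ℝ :=
  sInf {r : ℝ | ∃ γ : Measure (ℝ × ℝ),
    γ.map Prod.fst = nuMeas ρ ρt ∧ γ.map Prod.snd = nuMeas ρt ρ ∧
    r = ∫ p, (p.1 - p.2)^2 ∂γ}

/-- The penalty function `p_τ(m) = (K_τ/2) ((-m - m_τ)₊)²`. -/
def ptau (Kτ mτ m : ℝ) : ℝ := Kτ / 2 * (max (-m - mτ) 0)^2

/-- The energy functional `E_{(X⁰,ρ⁰)}(X,ρ)`. -/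
def Efun (α β θ : ℝ) (ρ0 : ℝ → ℝ) (X : ℝ) (ρ : ℝ → ℝ) : ℝ :=
  (∫ x in Ioi (0:ℝ), fEnt β (ρ x)) + θ * |Mdiff ρ ρ0| - α * X

/-- The squared tensorized metric `𝐝²((X,ρ),(X⁰,ρ⁰))`. -/
def dsq (lam : ℝ) (X0 : ℝ) (ρ0 : ℝ → ℝ) (X : ℝ) (ρ : ℝ → ℝ) : ℝ :=
  W2sq ρ ρ0 + lam * (X - X0)^2

/-- The JKO functional `J_{(X⁰,ρ⁰)}`. -/
def Jfun (lam α β θ τ Kτ mτ : ℝ) (X0 : ℝ) (ρ0 : ℝ → ℝ) (X : ℝ) (ρ : ℝ → ℝ) : ℝ :=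
  dsq lam X0 ρ0 X ρ / (2 * τ) + Efun α β θ ρ0 X ρ + ptau Kτ mτ (Mdiff ρ ρ0)

/-- `(X, ρ)` is a minimizer of the JKO functional over `𝒜`. -/
def IsJKOMin (lam α β θ τ Kτ mτ : ℝ) (X0 : ℝ) (ρ0 : ℝ → ℝ) (X : ℝ) (ρ : ℝ → ℝ) : Prop :=
  MemAdmSet X ρ ∧
  ∀ Y : ℝ, ∀ σ : ℝ → ℝ, MemAdmSet Y σ →
    Jfun lam α β θ τ Kτ mτ X0 ρ0 X ρ ≤ Jfun lam α β θ τ Kτ mτ X0 ρ0 Y σ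

/-- Hypothesis (H2) on the initial data `(X⁰, ρ⁰)`, with bounds `ρ_min, ρ_max`
and with `ρ0'` a derivative of `ρ⁰` on `[0,X⁰]` witnessing `C^{1,1}` regularity. -/
def H2 (β θ X0 ρmin ρmax : ℝ) (ρ0 ρ0' : ℝ → ℝ) : Prop :=
  0 < X0 ∧
  (∀ x : ℝ, 0 < ρ0 x) ∧
  (∀ x ∈ Icc 0 X0, HasDerivWithinAt ρ0 (ρ0' x) (Icc 0 X0) x) ∧
  (∃ K : NNReal, LipschitzOnWith K ρ0' (Icc 0 X0)) ∧
  (∀ x : ℝ, X0 < x → ρ0 x = 1) ∧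
  ρ0 0 ∈ Icc (rhoMinus β θ) (rhoPlus β θ) ∧
  0 < ρmin ∧ (∀ x ∈ Ioc 0 X0, ρmin ≤ ρ0 x ∧ ρ0 x ≤ ρmax) ∧ ρmax ≤ 1

/-- The monotone transport structure in the case `M(ρ,ρ⁰) ≥ 0`: a nondecreasing map
`T₊ : [0,X] → [0,X]`, vanishing on `[0,ℓ₊]`, pushing `ρ·Leb⌊(ℓ₊,X)` to `ρ⁰·Leb⌊(0,X)`,
with `M = ∫₀^{ℓ₊} ρ` and realizing the squared Wasserstein distance. -/
def TransportPlus (ρ0 ρ : ℝ → ℝ) (X : ℝ) (T : ℝ → ℝ) (ℓ : ℝ) : Prop :=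
  0 ≤ ℓ ∧ Measurable T ∧ MonotoneOn T (Icc 0 X) ∧
  (∀ x ∈ Icc 0 X, T x ∈ Icc 0 X) ∧
  (∀ x ∈ Icc 0 ℓ, T x = 0) ∧ T X = X ∧
  Measure.map T ((volume.withDensity (fun x => ENNReal.ofReal (ρ x))).restrict (Ioo ℓ X))
    = (volume.withDensity (fun x => ENNReal.ofReal (ρ0 x))).restrict (Ioo 0 X) ∧
  Mdiff ρ ρ0 = ∫ x in (0:ℝ)..ℓ, ρ x ∧
  W2sq ρ ρ0 = ∫ x in (0:ℝ)..X, (x - T x)^2 * ρ x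

/-- The monotone transport structure in the case `M(ρ,ρ⁰) < 0`. -/
def TransportMinus (ρ0 ρ : ℝ → ℝ) (X : ℝ) (T : ℝ → ℝ) (ℓ : ℝ) : Prop :=
  0 < ℓ ∧ Measurable T ∧ MonotoneOn T (Icc 0 X) ∧
  (∀ x ∈ Icc 0 X, T x ∈ Icc ℓ X) ∧
  T 0 = ℓ ∧ T X = X ∧
  Measure.map T ((volume.withDensity (fun x => ENNReal.ofReal (ρ x))).restrict (Ioo 0 X))
    = (volume.withDensity (fun x => ENNReal.ofReal (ρ0 x))).restrict (Ioo ℓ X) ∧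
  -(Mdiff ρ ρ0) = ∫ y in (0:ℝ)..ℓ, ρ0 y ∧
  W2sq ρ ρ0 = (∫ x in (0:ℝ)..X, (x - T x)^2 * ρ x) + ∫ y in (0:ℝ)..ℓ, y^2 * ρ0 y

/-- Transport structure with sign convention: `T` is `T₊` (with some `ℓ₊`, and `ℓ₋ = ℓ`
is taken `= 0`) when `M ≥ 0`, and `T₋` with `ℓ₋ = ℓ > 0` when `M < 0`. -/
def TransportStruct (ρ0 ρ : ℝ → ℝ) (X : ℝ) (T : ℝ → ℝ) (ℓ : ℝ) : Prop :=
  (0 ≤ Mdiff ρ ρ0 ∧ ℓ = 0 ∧ ∃ ℓp : ℝ, TransportPlus ρ0 ρ X T ℓp) ∨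
  (Mdiff ρ ρ0 < 0 ∧ TransportMinus ρ0 ρ X T ℓ)

/-- `ρ̄` is the continuous representative of `ρ` on `[0,X]`. -/
def ContRep (X : ℝ) (ρ ρb : ℝ → ℝ) : Prop :=
  ContinuousOn ρb (Icc 0 X) ∧ (∀ᵐ x : ℝ, x ∈ Ioo 0 X → ρ x = ρb x)

/-! ### Transport plans and optimal cost -/

/-- `γ` is a transport plan from `a` to `b`. -/
def IsPlan (a b : Measure ℝ) (γ : Measure (ℝ × ℝ)) : Prop :=
  γ.map Prod.fst = a ∧ γ.map Prod.snd = b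

/-- Quadratic cost of a plan, as an extended nonnegative number. -/
def planCost (γ : Measure (ℝ × ℝ)) : ℝ≥0∞ := ∫⁻ p, ENNReal.ofReal ((p.1 - p.2) ^ 2) ∂γ

/-- Optimal quadratic transport cost between two measures; it is `⊤` if there is no plan. -/
def optCost (a b : Measure ℝ) : ℝ≥0∞ := ⨅ γ : {γ // IsPlan a b γ}, planCost γ.1

theorem planCost_add (γ η : Measure (ℝ × ℝ)) :
    planCost (γ + η) = planCost γ + planCost η := lintegral_add_measure _ _ _

theorem optCost_le {a b : Measure ℝ} {γ : Measure (ℝ × ℝ)} (h : IsPlan a b γ) :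
    optCost a b ≤ planCost γ := iInf_le (fun γ : {γ // IsPlan a b γ} => planCost γ.1) ⟨γ, h⟩

theorem IsPlan.univ_fst {a b : Measure ℝ} {γ : Measure (ℝ × ℝ)} (h : IsPlan a b γ) :
    γ univ = a univ := by
  rw [← h.1, Measure.map_apply measurable_fst MeasurableSet.univ]; rfl

theorem IsPlan.univ_snd {a b : Measure ℝ} {γ : Measure (ℝ × ℝ)} (h : IsPlan a b γ) :
    γ univ = b univ := by
  rw [← h.2, Measure.map_apply measurable_snd MeasurableSet.univ]; rfl

theorem IsPlan.add {a b c d : Measure ℝ} {γ η : Measure (ℝ × ℝ)} (h : IsPlan a b γ)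
    (h' : IsPlan c d η) : IsPlan (a + c) (b + d) (γ + η) :=
  ⟨by rw [Measure.map_add _ _ measurable_fst, h.1, h'.1],
    by rw [Measure.map_add _ _ measurable_snd, h.2, h'.2]⟩

theorem IsPlan.ae_fst {a b : Measure ℝ} {γ : Measure (ℝ × ℝ)} (h : IsPlan a b γ)
    {P : ℝ → Prop} (hP : ∀ᵐ x ∂a, P x) : ∀ᵐ p ∂γ, P p.1 :=
  ae_of_ae_map measurable_fst.aemeasurable (h.1.symm ▸ hP)

theorem IsPlan.ae_snd {a b : Measure ℝ} {γ : Measure (ℝ × ℝ)} (h : IsPlan a b γ)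
    {P : ℝ → Prop} (hP : ∀ᵐ x ∂b, P x) : ∀ᵐ p ∂γ, P p.2 :=
  ae_of_ae_map measurable_snd.aemeasurable (h.2.symm ▸ hP)

theorem IsPlan.lintegral_fst {a b : Measure ℝ} {γ : Measure (ℝ × ℝ)} (h : IsPlan a b γ)
    {g : ℝ → ℝ≥0∞} (hg : Measurable g) : ∫⁻ p, g p.1 ∂γ = ∫⁻ x, g x ∂a := by
  rw [← h.1, lintegral_map hg measurable_fst]

theorem IsPlan.lintegral_snd {a b : Measure ℝ} {γ : Measure (ℝ × ℝ)} (h : IsPlan a b γ)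
    {g : ℝ → ℝ≥0∞} (hg : Measurable g) : ∫⁻ p, g p.2 ∂γ = ∫⁻ x, g x ∂b := by
  rw [← h.2, lintegral_map hg measurable_snd]

/-- Two finite measures of equal mass are coupled by their normalized product. -/
theorem exists_plan (u v : Measure ℝ) [IsFiniteMeasure u] [IsFiniteMeasure v]
    (h : u univ = v univ) : ∃ η, IsPlan u v η := by
  by_cases h0 : u univ = 0
  · have hu : u = 0 := Measure.measure_univ_eq_zero.1 h0
    have hv : v = 0 := Measure.measure_univ_eq_zero.1 (h ▸ h0)
    exact ⟨0, by simp [hu], by simp [hv]⟩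
  · refine ⟨(u univ)⁻¹ • u.prod v, ?_, ?_⟩
    · rw [Measure.map_smul, Measure.map_fst_prod, smul_smul, ← h,
        ENNReal.inv_mul_cancel h0 (measure_ne_top _ _), one_smul]
    · rw [Measure.map_smul, Measure.map_snd_prod, smul_smul,
        ENNReal.inv_mul_cancel h0 (measure_ne_top _ _), one_smul]

/-- Plans between finite measures on `[0, L]` have finite cost. -/
theorem planCost_ne_top {a b : Measure ℝ} [IsFiniteMeasure a] {γ : Measure (ℝ × ℝ)}
    (h : IsPlan a b γ) {L : ℝ} (ha : ∀ᵐ x ∂a, x ∈ Icc 0 L) (hb : ∀ᵐ x ∂b, x ∈ Icc 0 L) :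
    planCost γ ≠ ⊤ := by
  have h1 : planCost γ ≤ ∫⁻ _, ENNReal.ofReal (L ^ 2) ∂γ := by
    refine lintegral_mono_ae ?_
    filter_upwards [h.ae_fst ha, h.ae_snd hb] with p hp hq
    apply ENNReal.ofReal_le_ofReal
    have : |p.1 - p.2| ≤ L := by rw [abs_le]; constructor <;> linarith [hp.1, hp.2, hq.1, hq.2]
    rw [← sq_abs]; gcongr
  rw [lintegral_const, h.univ_fst] at h1
  exact ne_top_of_le_ne_top (ENNReal.mul_ne_top ofReal_ne_top (measure_ne_top _ _)) h1

theorem optCost_ne_top {a b : Measure ℝ} [IsFiniteMeasure a] [IsFiniteMeasure b]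
    (hab : a univ = b univ) {L : ℝ}
    (ha : ∀ᵐ x ∂a, x ∈ Icc 0 L) (hb : ∀ᵐ x ∂b, x ∈ Icc 0 L) : optCost a b ≠ ⊤ := by
  obtain ⟨η, hη⟩ := exists_plan a b hab
  exact ne_top_of_le_ne_top (planCost_ne_top hη ha hb) (optCost_le hη)

/-- A common part of the marginals may be left at rest. -/
theorem optCost_add_le (a b d : Measure ℝ) : optCost (a + d) (b + d) ≤ optCost a b := by
  refine le_iInf fun γ => ?_
  have hm : Measurable fun x : ℝ => (x, x) := by fun_prop
  have hd : IsPlan d d (d.map fun x => (x, x)) := by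
    constructor
    · rw [Measure.map_map measurable_fst hm]; exact Measure.map_id
    · rw [Measure.map_map measurable_snd hm]; exact Measure.map_id
  refine (optCost_le (γ.2.add hd)).trans ?_
  rw [planCost_add]
  have : planCost (d.map fun x => (x, x)) = 0 := by
    unfold planCost
    rw [lintegral_map (by fun_prop) hm]; simp
  rw [this, add_zero]

/-- Conversely, a common part `d` of the marginals that lies to the right of everything else
may be discarded: the mass that a plan sends from `a` into `d` and the mass it sends from `d`
to `b` are coupled directly, and this costs no more because
`(x - y)² ≤ (Λ - x)² + (Λ - y)²` for `x, y ≤ Λ`. This cancellation makes the transport term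
independent of the interval on which the marginals are taken. -/
theorem optCost_le_add {a b d : Measure ℝ} [IsFiniteMeasure a] [IsFiniteMeasure b]
    [IsFiniteMeasure d] (hab : a univ = b univ) {Λ : ℝ} (ha : ∀ᵐ x ∂a, x ≤ Λ)
    (hb : ∀ᵐ x ∂b, x ≤ Λ) (hd : ∀ᵐ x ∂d, Λ < x) :
    optCost a b ≤ optCost (a + d) (b + d) := by
  refine le_iInf fun ⟨γ, hγ⟩ => ?_
  have hfin : IsFiniteMeasure γ := ⟨by rw [hγ.univ_fst]; exact measure_lt_top _ _⟩
  set A : Set (ℝ × ℝ) := {p | p.1 ≤ Λ} with hA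
  set B : Set (ℝ × ℝ) := {p | p.2 ≤ Λ} with hB
  have hAm : MeasurableSet A := measurableSet_le measurable_fst measurable_const
  have hBm : MeasurableSet B := measurableSet_le measurable_snd measurable_const
  have key : ∀ e : Measure ℝ, (∀ᵐ x ∂e, x ≤ Λ) → (e + d).restrict (Iic Λ) = e := by
    intro e he
    rw [Measure.restrict_add, Measure.restrict_eq_self_of_ae_mem (s := Iic Λ) he,
      Measure.restrict_eq_zero.2, add_zero]
    refine measure_mono_null ?_ (ae_iff.1 hd)
    intro x hx h
    exact absurd h (not_lt.2 hx)
  have hfA : (γ.restrict A).map Prod.fst = a := by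
    rw [← key a ha, ← hγ.1, Measure.restrict_map measurable_fst measurableSet_Iic]; rfl
  have hsB : (γ.restrict B).map Prod.snd = b := by
    rw [← key b hb, ← hγ.2, Measure.restrict_map measurable_snd measurableSet_Iic]; rfl
  -- `AA` moves `a` to `b`, `AB` moves `a` to `d`, and `BA` moves `d` to `b`.
  set AA := γ.restrict (A ∩ B)
  set AB := γ.restrict (A \ B)
  set BA := γ.restrict (B \ A)
  have e1 : AA + AB = γ.restrict A := Measure.restrict_inter_add_sdiff A hBm
  have e2 : AA + BA = γ.restrict B := by
    have := Measure.restrict_inter_add_sdiff (μ := γ) B hAm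
    rwa [inter_comm] at this
  have hmass : (AB.map Prod.fst) univ = (BA.map Prod.snd) univ := by
    rw [Measure.map_apply measurable_fst MeasurableSet.univ,
      Measure.map_apply measurable_snd MeasurableSet.univ, preimage_univ, preimage_univ]
    have i1 : AA univ + AB univ = AA univ + BA univ := by
      rw [← Measure.add_apply, ← Measure.add_apply, e1, e2]
      have := hab
      rw [← hfA, ← hsB, Measure.map_apply measurable_fst MeasurableSet.univ,
        Measure.map_apply measurable_snd MeasurableSet.univ, preimage_univ, preimage_univ] at this
      exact this
    exact (ENNReal.add_right_inj (measure_ne_top _ _)).1 i1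
  obtain ⟨η, hη⟩ := exists_plan _ _ hmass
  have hplan : IsPlan a b (AA + η) := by
    constructor
    · rw [Measure.map_add _ _ measurable_fst, hη.1, ← Measure.map_add _ _ measurable_fst, e1, hfA]
    · rw [Measure.map_add _ _ measurable_snd, hη.2, ← Measure.map_add _ _ measurable_snd, e2, hsB]
  refine (optCost_le hplan).trans ?_
  have hsub : planCost AA + (planCost AB + planCost BA) ≤ planCost γ := by
    rw [← add_assoc, ← planCost_add, e1, ← planCost_add]
    have : γ.restrict A + BA ≤ γ := by
      calc γ.restrict A + BA ≤ γ.restrict A + γ.restrict Aᶜ := by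
            gcongr
            exact Measure.restrict_mono (fun p hp => hp.2) le_rfl
        _ = γ := Measure.restrict_add_restrict_compl hAm
    exact lintegral_mono' this le_rfl
  refine le_trans ?_ hsub
  rw [planCost_add]
  gcongr
  have mg : Measurable fun x : ℝ => ENNReal.ofReal ((Λ - x) ^ 2) := by fun_prop
  have c1 : planCost η ≤ ∫⁻ p, (ENNReal.ofReal ((Λ - p.1) ^ 2) +
      ENNReal.ofReal ((Λ - p.2) ^ 2)) ∂η := by
    refine lintegral_mono_ae ?_
    have m1 : ∀ᵐ x ∂(AB.map Prod.fst), x ≤ Λ := by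
      rw [ae_map_iff measurable_fst.aemeasurable measurableSet_Iic]
      exact (ae_restrict_mem (hAm.diff hBm)).mono fun p hp => hp.1
    have m2 : ∀ᵐ x ∂(BA.map Prod.snd), x ≤ Λ := by
      rw [ae_map_iff measurable_snd.aemeasurable measurableSet_Iic]
      exact (ae_restrict_mem (hBm.diff hAm)).mono fun p hp => hp.1
    filter_upwards [hη.ae_fst m1, hη.ae_snd m2] with p h1 h2
    rw [← ENNReal.ofReal_add (by positivity) (by positivity)]
    apply ENNReal.ofReal_le_ofReal
    nlinarith [mul_nonneg (sub_nonneg.2 h1) (sub_nonneg.2 h2)]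
  refine c1.trans ?_
  rw [lintegral_add_left (by fun_prop), hη.lintegral_fst mg, hη.lintegral_snd mg,
    lintegral_map mg measurable_fst, lintegral_map mg measurable_snd]
  refine add_le_add (lintegral_mono_ae ?_) (lintegral_mono_ae ?_)
  · filter_upwards [ae_restrict_mem (hAm.diff hBm)] with p hp
    have h1 : p.1 ≤ Λ := hp.1
    have h2 : Λ < p.2 := not_le.1 hp.2
    apply ENNReal.ofReal_le_ofReal
    nlinarith [mul_nonneg (sub_nonneg.2 h1) (sub_nonneg.2 h2.le), sq_nonneg (p.2 - Λ)]
  · filter_upwards [ae_restrict_mem (hBm.diff hAm)] with p hp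
    have h1 : p.2 ≤ Λ := hp.1
    have h2 : Λ < p.1 := not_le.1 hp.2
    apply ENNReal.ofReal_le_ofReal
    nlinarith [mul_nonneg (sub_nonneg.2 h1) (sub_nonneg.2 h2.le), sq_nonneg (p.1 - Λ)]

/-- Replacing the part `u` of the first marginal that sits in the window `(w, Z)` by another measure
`v` on the window, of the same mass, raises the optimal cost by at most `4 Z (Z - w)` per unit of
mass: the mass of `v` is coupled arbitrarily with the targets of `u`, and all its points lie within
`Z - w` of those of `u`. -/
theorem optCost_window {a u v b : Measure ℝ} [IsFiniteMeasure a] [IsFiniteMeasure u]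
    [IsFiniteMeasure v] {w Z : ℝ} (hw : 0 ≤ w) (hwZ : w ≤ Z) (huv : u univ = v univ)
    (ha : ∀ᵐ x ∂a, x ≤ w) (hu : ∀ᵐ x ∂u, x ∈ Ioo w Z)
    (hv : ∀ᵐ x ∂v, x ∈ Ioo w Z) (hb : ∀ᵐ x ∂b, x ∈ Icc 0 Z) :
    optCost (a + v) b ≤ optCost (a + u) b + ENNReal.ofReal (4 * Z * (Z - w)) * u univ := by
  unfold optCost
  rw [ENNReal.iInf_add]
  refine le_iInf fun ⟨γ, hγ⟩ => ?_
  have hfin : IsFiniteMeasure γ := ⟨by rw [hγ.univ_fst]; exact measure_lt_top _ _⟩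
  set A : Set (ℝ × ℝ) := {p | p.1 ≤ w} with hA
  have hAm : MeasurableSet A := measurableSet_le measurable_fst measurable_const
  have hfA : (γ.restrict A).map Prod.fst = a := by
    have : (γ.restrict A).map Prod.fst = (a + u).restrict (Iic w) := by
      rw [← hγ.1, Measure.restrict_map measurable_fst measurableSet_Iic]; rfl
    rw [this, Measure.restrict_add, Measure.restrict_eq_self_of_ae_mem (s := Iic w) ha,
      Measure.restrict_eq_zero.2, add_zero]
    refine measure_mono_null ?_ (ae_iff.1 hu)
    intro x hx h
    exact absurd h.1 (not_lt.2 hx)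
  have hfAc : (γ.restrict Aᶜ).map Prod.fst = u := by
    have : (γ.restrict Aᶜ).map Prod.fst = (a + u).restrict (Iic w)ᶜ := by
      rw [← hγ.1, Measure.restrict_map measurable_fst measurableSet_Iic.compl]; rfl
    rw [this, Measure.restrict_add, Measure.restrict_eq_zero.2, zero_add,
      Measure.restrict_eq_self_of_ae_mem]
    · filter_upwards [hu] with x hx
      exact not_le.2 hx.1
    · refine measure_mono_null ?_ (ae_iff.1 ha)
      intro x hx h
      exact hx h
  have hγs : γ.restrict A + γ.restrict Aᶜ = γ := Measure.restrict_add_restrict_compl hAm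
  set κ := (γ.restrict Aᶜ).map Prod.snd with hκ
  have hAc : IsPlan u κ (γ.restrict Aᶜ) := ⟨hfAc, rfl⟩
  have hκu : κ univ = u univ := by rw [← hAc.univ_fst, hAc.univ_snd]
  obtain ⟨η, hη⟩ := exists_plan v κ (by rw [hκu, huv])
  have hplan : IsPlan (a + v) b (γ.restrict A + η) := by
    constructor
    · rw [Measure.map_add _ _ measurable_fst, hfA, hη.1]
    · rw [Measure.map_add _ _ measurable_snd, hη.2, ← Measure.map_add _ _ measurable_snd, hγs,
        hγ.2]
  refine (optCost_le hplan).trans ?_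
  change _ ≤ planCost γ + _
  conv_rhs => rw [← hγs]
  rw [planCost_add, planCost_add, add_assoc]
  gcongr
  have hκb : ∀ᵐ y ∂κ, y ∈ Icc 0 Z := by
    refine (ae_map_iff measurable_snd.aemeasurable measurableSet_Icc).2 ?_
    exact ae_restrict_of_ae (hγ.ae_snd hb)
  have mg : Measurable fun x : ℝ => ENNReal.ofReal ((w - x) ^ 2) := by fun_prop
  -- Both costs are compared with that of moving the window mass from the point `w`.
  have c1 : planCost η ≤ ∫⁻ p, (ENNReal.ofReal ((w - p.2) ^ 2) +
      ENNReal.ofReal (2 * Z * (Z - w))) ∂η := by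
    refine lintegral_mono_ae ?_
    filter_upwards [hη.ae_fst hv, hη.ae_snd hκb] with p h1 h2
    rw [← ENNReal.ofReal_add (by positivity)
      (mul_nonneg (by linarith) (by linarith))]
    apply ENNReal.ofReal_le_ofReal
    have e : (p.1 - p.2) ^ 2 = (w - p.2) ^ 2 + (p.1 - w) * (p.1 + w - 2 * p.2) := by ring
    have : (p.1 - w) * (p.1 + w - 2 * p.2) ≤ (Z - w) * (2 * Z) :=
      (mul_le_mul_of_nonneg_left (by linarith [h1.1, h1.2, h2.1, h2.2])
        (by linarith [h1.1])).trans
      (mul_le_mul_of_nonneg_right (by linarith [h1.2]) (by linarith))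
    linarith
  have c2 : ∫⁻ p, ENNReal.ofReal ((w - p.2) ^ 2) ∂(γ.restrict Aᶜ) ≤
      ∫⁻ p, (ENNReal.ofReal ((p.1 - p.2) ^ 2) +
      ENNReal.ofReal (2 * Z * (Z - w))) ∂(γ.restrict Aᶜ) := by
    refine lintegral_mono_ae ?_
    filter_upwards [hAc.ae_fst hu, hAc.ae_snd hκb] with p h1 h2
    rw [← ENNReal.ofReal_add (by positivity)
      (mul_nonneg (by linarith) (by linarith))]
    apply ENNReal.ofReal_le_ofReal
    have e : (w - p.2) ^ 2 = (p.1 - p.2) ^ 2 + (p.1 - w) * (2 * p.2 - p.1 - w) := by ring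
    have : (p.1 - w) * (2 * p.2 - p.1 - w) ≤ (Z - w) * (2 * Z) :=
      (mul_le_mul_of_nonneg_left (by linarith [h1.1, h1.2, h2.1, h2.2])
        (by linarith [h1.1])).trans
      (mul_le_mul_of_nonneg_right (by linarith [h1.2]) (by linarith))
    linarith
  refine c1.trans ?_
  rw [lintegral_add_right _ measurable_const, lintegral_const, hη.univ_snd, hκu,
    hη.lintegral_snd mg, ← hAc.lintegral_snd mg]
  refine (add_le_add c2 le_rfl).trans ?_
  rw [lintegral_add_right _ measurable_const, lintegral_const, hAc.univ_fst, add_assoc, ← add_mul,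
    ← ENNReal.ofReal_add (mul_nonneg (by linarith) (by linarith))
      (mul_nonneg (by linarith) (by linarith))]
  refine add_le_add le_rfl (le_of_eq ?_)
  congr 2
  ring

/-! ### Admissible densities and the Wasserstein term -/

theorem Mfun_congr {ρ ρ' : ℝ → ℝ} (h : ρ =ᵐ[volume.restrict (Ioi 0)] ρ') :
    Mfun ρ = Mfun ρ' := by
  unfold Mfun
  congr 1
  apply integral_congr_ae
  filter_upwards [h] with x hx
  rw [hx]

theorem xA_congr {ρ ρ' : ℝ → ℝ} (h : ρ =ᵐ[volume.restrict (Ioi 0)] ρ') : xA ρ = xA ρ' := by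
  unfold xA
  congr 1
  ext x
  refine and_congr_right fun hx => ?_
  have h' := (ae_restrict_iff' measurableSet_Ioi).1 h
  constructor <;> intro H <;> filter_upwards [h', H] with y hy1 hy2 hy
  · rw [← hy1 (hx.trans hy)]; exact hy2 hy
  · rw [hy1 (hx.trans hy)]; exact hy2 hy

theorem nuMeas_congr {ρ ρ' μ μ' : ℝ → ℝ} (h : ρ =ᵐ[volume.restrict (Ioi 0)] ρ')
    (hμ : μ =ᵐ[volume.restrict (Ioi 0)] μ') : nuMeas ρ μ = nuMeas ρ' μ' := by
  unfold nuMeas Mdiff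
  rw [Mfun_congr h, Mfun_congr hμ, xA_congr h, xA_congr hμ,
    restrict_withDensity measurableSet_Ioo, restrict_withDensity measurableSet_Ioo]
  congr 1
  apply withDensity_congr_ae
  have := ae_restrict_of_ae_restrict_of_subset
    (Ioo_subset_Ioi_self : Ioo (0 : ℝ) (max (xA ρ') (xA μ')) ⊆ Ioi 0) h
  filter_upwards [this] with x hx
  rw [hx]

/-- The functional depends on both densities only through their a.e. classes on `ℝ₊`, so they may be
replaced by representatives that are continuous up to the interface. -/
theorem Jfun_congr {lam α β θ τ Kτ mτ X0 X : ℝ} {ρ ρ' μ μ' : ℝ → ℝ}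
    (h : ρ =ᵐ[volume.restrict (Ioi 0)] ρ') (hμ : μ =ᵐ[volume.restrict (Ioi 0)] μ') :
    Jfun lam α β θ τ Kτ mτ X0 μ X ρ = Jfun lam α β θ τ Kτ mτ X0 μ' X ρ' := by
  unfold Jfun dsq Efun W2sq
  rw [nuMeas_congr h hμ, nuMeas_congr hμ h]
  unfold Mdiff
  rw [Mfun_congr h, Mfun_congr hμ]
  have : ∫ x in Ioi (0 : ℝ), fEnt β (ρ x) = ∫ x in Ioi (0 : ℝ), fEnt β (ρ' x) := by
    apply integral_congr_ae
    filter_upwards [h] with x hx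
    rw [hx]
  rw [this]

theorem xA_nonneg (ρ : ℝ → ℝ) : 0 ≤ xA ρ := Real.sInf_nonneg fun _ hx => hx.1.le

theorem xA_le {ρ : ℝ → ℝ} {B : ℝ} (hB : 0 < B) (h : ∀ᵐ x : ℝ, x ∈ Ioi B → ρ x = 1) :
    xA ρ ≤ B := csInf_le ⟨0, fun _ hx => hx.1.le⟩ ⟨hB, h⟩

/-- The infimum defining `x_ρ` is attained: `ρ ≡ 1` a.e. on `(x_ρ, ∞)`. -/
theorem ae_one_of_xA {ρ : ℝ → ℝ} {B : ℝ} (hB : 0 < B) (h : ∀ᵐ x : ℝ, x ∈ Ioi B → ρ x = 1) :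
    ∀ᵐ x : ℝ, xA ρ < x → ρ x = 1 := by
  have key : ∀ n : ℕ, ∀ᵐ x : ℝ, xA ρ + 1 / ((n : ℝ) + 1) < x → ρ x = 1 := by
    intro n
    have hlt : xA ρ < xA ρ + 1 / ((n : ℝ) + 1) := by
      have : (0 : ℝ) < 1 / ((n : ℝ) + 1) := by positivity
      linarith
    obtain ⟨b, hb, hb2⟩ := exists_lt_of_csInf_lt
      (s := {x : ℝ | 0 < x ∧ ∀ᵐ y : ℝ, y ∈ Ioi x → ρ y = 1}) ⟨B, hB, h⟩ hlt
    filter_upwards [hb.2] with x hx hx2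
    exact hx (hb2.trans hx2)
  filter_upwards [ae_all_iff.2 key] with x hx h'
  obtain ⟨n, hn⟩ := exists_nat_one_div_lt (sub_pos.2 h')
  exact hx n (by linarith)

/-- Measurable densities with values in `[0, C]` that equal `1` everywhere beyond `B > 0`. -/
structure NiceDensity (ρ : ℝ → ℝ) (B C : ℝ) : Prop where
  pos : 0 < B
  meas : Measurable ρ
  nonneg : ∀ x, 0 ≤ ρ x
  le : ∀ x, ρ x ≤ C
  one : ∀ x, B < x → ρ x = 1

namespace NiceDensity

variable {ρ μ : ℝ → ℝ} {B C B' C' : ℝ}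

theorem integrableOn (h : NiceDensity ρ B C) (u v : ℝ) : IntegrableOn ρ (Ioo u v) := by
  refine Measure.integrableOn_of_bounded (M := C) (by simp) h.meas.aestronglyMeasurable ?_
  refine Eventually.of_forall fun x => ?_
  rw [Real.norm_eq_abs, abs_of_nonneg (h.nonneg x)]
  exact h.le x

theorem xA_le (h : NiceDensity ρ B C) : xA ρ ≤ B :=
  _root_.xA_le h.pos (Eventually.of_forall h.one)

theorem ae_one (h : NiceDensity ρ B C) : ∀ᵐ x : ℝ, xA ρ < x → ρ x = 1 :=
  ae_one_of_xA h.pos (Eventually.of_forall h.one)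

theorem Mfun_eq (h : NiceDensity ρ B C) {L : ℝ} (hL : xA ρ ≤ L) :
    Mfun ρ = (∫ x in Ioo 0 L, ρ x) - L := by
  have hL0 : 0 ≤ L := (xA_nonneg ρ).trans hL
  have e1 : ∫ x in Ioi (0 : ℝ), (1 - ρ x) = ∫ x in Ioo 0 L, (1 - ρ x) := by
    rw [← integral_Ioc_eq_integral_Ioo]
    apply setIntegral_eq_of_subset_of_ae_sdiff_eq_zero measurableSet_Ioi.nullMeasurableSet
      Ioc_subset_Ioi_self
    filter_upwards [h.ae_one] with x hx hx2
    have : L < x := by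
      by_contra hlt
      exact hx2.2 ⟨hx2.1, not_lt.1 hlt⟩
    rw [hx (hL.trans_lt this), sub_self]
  have hc : IntegrableOn (fun _ : ℝ => (1 : ℝ)) (Ioo 0 L) := integrableOn_const (by simp)
  unfold Mfun
  rw [e1, integral_sub hc (h.integrableOn 0 L)]
  simp [hL0]

/-- The mass of a density on an interval. -/
theorem mass (h : NiceDensity ρ B C) (u v : ℝ) :
    (volume.withDensity fun x => ENNReal.ofReal (ρ x)).restrict (Ioo u v) univ =
      ENNReal.ofReal (∫ x in Ioo u v, ρ x) := by
  rw [Measure.restrict_apply_univ, withDensity_apply _ measurableSet_Ioo,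
    ofReal_integral_eq_lintegral_ofReal (h.integrableOn u v) (Eventually.of_forall h.nonneg)]

theorem isFinite (h : NiceDensity ρ B C) (u v : ℝ) :
    IsFiniteMeasure ((volume.withDensity fun x => ENNReal.ofReal (ρ x)).restrict (Ioo u v)) :=
  ⟨by rw [h.mass]; exact ofReal_lt_top⟩

theorem isFinite_nuMeas (h : NiceDensity ρ B C) (μ : ℝ → ℝ) : IsFiniteMeasure (nuMeas ρ μ) := by
  have := h.isFinite 0 (max (xA ρ) (xA μ))
  refine ⟨?_⟩
  unfold nuMeas
  rw [Measure.add_apply, Measure.smul_apply]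
  exact ENNReal.add_lt_top.2 ⟨measure_lt_top _ _,
    ENNReal.mul_lt_top ofReal_lt_top (measure_lt_top _ _)⟩

/-- The reservoir masses at the origin make both marginals have the same total mass. -/
theorem nuMeas_univ (h : NiceDensity ρ B C) (h' : NiceDensity μ B' C') :
    nuMeas ρ μ univ = nuMeas μ ρ univ := by
  unfold nuMeas
  rw [Measure.add_apply, Measure.add_apply, Measure.smul_apply, Measure.smul_apply,
    max_comm (xA μ), h.mass, h'.mass]
  unfold Mdiff
  rw [h.Mfun_eq (le_max_left _ (xA μ)), h'.Mfun_eq (le_max_right (xA ρ) _)]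
  set L := max (xA ρ) (xA μ)
  set I := ∫ x in Ioo 0 L, ρ x with hI
  set I' := ∫ x in Ioo 0 L, μ x with hI'
  have p1 : 0 ≤ I := integral_nonneg h.nonneg
  have p2 : 0 ≤ I' := integral_nonneg h'.nonneg
  simp only [measure_univ, smul_eq_mul, mul_one]
  rcases le_total I I' with hle | hle
  · rw [ENNReal.ofReal_of_nonpos (p := I - L - (I' - L)) (by linarith), add_zero,
      ← ENNReal.ofReal_add p1 (by linarith)]
    congr 1; ring
  · rw [ENNReal.ofReal_of_nonpos (p := I' - L - (I - L)) (by linarith), add_zero,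
      ← ENNReal.ofReal_add p2 (by linarith)]
    congr 1; ring

end NiceDensity

theorem nuMeas_supp (ρ μ : ℝ → ℝ) :
    ∀ᵐ x ∂(nuMeas ρ μ), x ∈ Icc 0 (max (xA ρ) (xA μ)) := by
  unfold nuMeas
  rw [ae_add_measure_iff]
  refine ⟨(ae_restrict_mem measurableSet_Ioo).mono fun x hx => Ioo_subset_Icc_self hx, ?_⟩
  refine Measure.ae_smul_measure ?_ _
  refine (ae_dirac_iff measurableSet_Icc).2 ?_
  exact ⟨le_rfl, (xA_nonneg ρ).trans (le_max_left _ _)⟩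

/-- Enlarging the interval `(0, Λ)` of the marginal `ν(ρ, μ)` to `(0, Z)` adds Lebesgue measure on
the new part, where `ρ ≡ 1`; the added measure is the same for `ν(μ, ρ)`. -/
theorem NiceDensity.nuMeas_add {ρ : ℝ → ℝ} {B C : ℝ} (h : NiceDensity ρ B C) (μ : ℝ → ℝ) {Z : ℝ}
    (hZ : max (xA ρ) (xA μ) ≤ Z) :
    nuMeas ρ μ + volume.restrict (Ioo (max (xA ρ) (xA μ)) Z) =
      (volume.withDensity fun x => ENNReal.ofReal (ρ x)).restrict (Ioo 0 Z)
        + ENNReal.ofReal (Mdiff μ ρ) • Measure.dirac 0 := by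
  unfold nuMeas
  set Λ := max (xA ρ) (xA μ) with hΛ
  have hΛ0 : 0 ≤ Λ := (xA_nonneg ρ).trans (le_max_left _ _)
  rw [add_right_comm]
  congr 1
  rw [restrict_withDensity measurableSet_Ioo, restrict_withDensity measurableSet_Ioo,
    Measure.restrict_congr_set Ioo_ae_eq_Ioc, Measure.restrict_congr_set Ioo_ae_eq_Ioc,
    Measure.restrict_congr_set Ioo_ae_eq_Ioc, ← Ioc_union_Ioc_eq_Ioc hΛ0 hZ,
    Measure.restrict_union (Ioc_disjoint_Ioc_of_le le_rfl) measurableSet_Ioc,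
    withDensity_add_measure]
  congr 1
  conv_lhs => rw [← withDensity_one (μ := volume.restrict (Ioc Λ Z))]
  apply withDensity_congr_ae
  filter_upwards [ae_restrict_mem measurableSet_Ioc, ae_restrict_of_ae h.ae_one] with x hx hx1
  rw [hx1 ((le_max_left _ _).trans_lt hx.1)]
  simp

/-- The real-valued infimum in `W2sq` is the optimal cost: every competing plan has finite cost, so
the Bochner integrals in `W2sq` are not junk values. -/
theorem NiceDensity.W2sq_eq {ρ μ : ℝ → ℝ} {B C : ℝ} (h : NiceDensity ρ B C) :
    W2sq ρ μ = (optCost (nuMeas ρ μ) (nuMeas μ ρ)).toReal := by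
  have := h.isFinite_nuMeas μ
  have hne : ∀ γ : {γ // IsPlan (nuMeas ρ μ) (nuMeas μ ρ) γ}, planCost γ.1 ≠ ⊤ := fun γ =>
    planCost_ne_top γ.2 (nuMeas_supp ρ μ) (by rw [max_comm]; exact nuMeas_supp μ ρ)
  unfold optCost W2sq
  rw [ENNReal.toReal_iInf hne, iInf]
  congr 1
  ext r
  simp only [mem_ofPred_eq, mem_range, Subtype.exists, exists_prop]
  have hI : ∀ γ : Measure (ℝ × ℝ), ∫ p, (p.1 - p.2) ^ 2 ∂γ = (planCost γ).toReal := fun γ =>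
    integral_eq_lintegral_of_nonneg_ae (Eventually.of_forall fun p => sq_nonneg _)
      (by fun_prop)
  constructor
  · rintro ⟨γ, h1, h2, rfl⟩
    exact ⟨γ, ⟨h1, h2⟩, (hI γ).symm⟩
  · rintro ⟨γ, ⟨h1, h2⟩, rfl⟩
    exact ⟨γ, h1, h2, (hI γ).symm⟩

/-- A modification of `ρ` inside the window `(w, Z)` that preserves its mass raises the squared
distance by at most `4 Z (Z - w)` times that mass. The intervals on which `W2sq σ μ` and `W2sq ρ μ`
are computed may differ, so both are compared with the optimal cost on `(0, Z)`. -/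
theorem W2sq_window {ρ σ μ : ℝ → ℝ} {B C B₁ C₁ B₂ C₂ w Z : ℝ} (hρ : NiceDensity ρ B C)
    (hσ : NiceDensity σ B₁ C₁) (hμ : NiceDensity μ B₂ C₂) (hM : Mfun σ = Mfun ρ)
    (hw : 0 ≤ w) (hwZ : w ≤ Z) (hρZ : xA ρ ≤ Z) (hσZ : xA σ ≤ Z) (hμZ : xA μ ≤ Z)
    (heq : ∀ x, x ≤ w → σ x = ρ x)
    (hint : ∫ x in Ioo w Z, σ x = ∫ x in Ioo w Z, ρ x) :
    W2sq σ μ ≤ W2sq ρ μ + 4 * Z * (Z - w) * ∫ x in Ioo w Z, ρ x := by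
  have f1 := hσ.isFinite_nuMeas μ
  have f2 := hμ.isFinite_nuMeas σ
  have f3 := hρ.isFinite_nuMeas μ
  have f4 := hμ.isFinite_nuMeas ρ
  have hne : optCost (nuMeas ρ μ) (nuMeas μ ρ) ≠ ⊤ :=
    optCost_ne_top (hρ.nuMeas_univ hμ) (nuMeas_supp ρ μ)
      (by rw [max_comm]; exact nuMeas_supp μ ρ)
  have hp : 0 ≤ 4 * Z * (Z - w) := mul_nonneg (by linarith) (by linarith)
  have hpi : 0 ≤ ∫ x in Ioo w Z, ρ x := integral_nonneg hρ.nonneg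
  set a : Measure ℝ := (volume.withDensity fun x => ENNReal.ofReal (ρ x)).restrict (Ioo 0 w)
    + ENNReal.ofReal (Mdiff μ ρ) • Measure.dirac 0 with ha
  set b : Measure ℝ := (volume.withDensity fun x => ENNReal.ofReal (μ x)).restrict (Ioo 0 Z)
    + ENNReal.ofReal (Mdiff ρ μ) • Measure.dirac 0 with hb
  have split : ∀ κ : ℝ → ℝ,
      (volume.withDensity fun x => ENNReal.ofReal (κ x)).restrict (Ioo 0 Z) =
      (volume.withDensity fun x => ENNReal.ofReal (κ x)).restrict (Ioo 0 w) +
      (volume.withDensity fun x => ENNReal.ofReal (κ x)).restrict (Ioo w Z) := by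
    intro κ
    rw [restrict_withDensity measurableSet_Ioo, restrict_withDensity measurableSet_Ioo,
      restrict_withDensity measurableSet_Ioo,
      Measure.restrict_congr_set Ioo_ae_eq_Ioc, Measure.restrict_congr_set Ioo_ae_eq_Ioc,
      Measure.restrict_congr_set Ioo_ae_eq_Ioc, ← Ioc_union_Ioc_eq_Ioc hw hwZ,
      Measure.restrict_union (Ioc_disjoint_Ioc_of_le le_rfl) measurableSet_Ioc,
      withDensity_add_measure]
  have hσa : (volume.withDensity fun x => ENNReal.ofReal (σ x)).restrict (Ioo 0 w) =
      (volume.withDensity fun x => ENNReal.ofReal (ρ x)).restrict (Ioo 0 w) := by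
    rw [restrict_withDensity measurableSet_Ioo, restrict_withDensity measurableSet_Ioo]
    apply withDensity_congr_ae
    filter_upwards [ae_restrict_mem measurableSet_Ioo] with x hx
    rw [heq x hx.2.le]
  have eρ := hρ.nuMeas_add μ (max_le hρZ hμZ)
  have eσ := hσ.nuMeas_add μ (max_le hσZ hμZ)
  have eμρ := hμ.nuMeas_add ρ (max_le hμZ hρZ)
  have eμσ := hμ.nuMeas_add σ (max_le hμZ hσZ)
  have m1 : Mdiff μ σ = Mdiff μ ρ := by unfold Mdiff; rw [hM]
  have m2 : Mdiff σ μ = Mdiff ρ μ := by unfold Mdiff; rw [hM]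
  rw [split, add_right_comm, ← ha] at eρ
  rw [split, add_right_comm, hσa, m1, ← ha] at eσ
  rw [← hb, max_comm] at eμρ
  rw [m2, ← hb, max_comm] at eμσ
  have := hρ.isFinite 0 w
  have := hρ.isFinite w Z
  have := hσ.isFinite w Z
  have hafin : IsFiniteMeasure a := by
    refine ⟨?_⟩
    rw [ha, Measure.add_apply, Measure.smul_apply]
    exact ENNReal.add_lt_top.2 ⟨measure_lt_top _ _,
      ENNReal.mul_lt_top ofReal_lt_top (measure_lt_top _ _)⟩
  -- Lebesgue measure on `(max (xA σ) (xA μ), Z)` is common to both marginals and may be discarded.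
  have s1 : optCost (nuMeas σ μ) (nuMeas μ σ) ≤ optCost
      (a + (volume.withDensity fun x => ENNReal.ofReal (σ x)).restrict (Ioo w Z)) b := by
    rw [← eσ, ← eμσ]
    refine optCost_le_add (Λ := max (xA σ) (xA μ)) (hσ.nuMeas_univ hμ)
      ((nuMeas_supp σ μ).mono fun x hx => hx.2) ?_
      ((ae_restrict_mem measurableSet_Ioo).mono fun x hx => hx.1)
    rw [max_comm]
    exact (nuMeas_supp μ σ).mono fun x hx => hx.2
  have s2 : optCost
      (a + (volume.withDensity fun x => ENNReal.ofReal (ρ x)).restrict (Ioo w Z)) b ≤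
      optCost (nuMeas ρ μ) (nuMeas μ ρ) := by
    rw [← eρ, ← eμρ]
    exact optCost_add_le _ _ _
  have s3 := optCost_window (a := a) (b := b)
    (u := (volume.withDensity fun x => ENNReal.ofReal (ρ x)).restrict (Ioo w Z))
    (v := (volume.withDensity fun x => ENNReal.ofReal (σ x)).restrict (Ioo w Z))
    hw hwZ (by rw [hρ.mass, hσ.mass, hint])
    (by
      rw [ha, ae_add_measure_iff]
      refine ⟨(ae_restrict_mem measurableSet_Ioo).mono fun x hx => hx.2.le, ?_⟩
      refine Measure.ae_smul_measure ?_ _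
      refine (ae_dirac_iff measurableSet_Iic).2 ?_
      exact hw)
    (ae_restrict_mem measurableSet_Ioo) (ae_restrict_mem measurableSet_Ioo)
    (by
      rw [hb, ae_add_measure_iff]
      refine ⟨(ae_restrict_mem measurableSet_Ioo).mono fun x hx => Ioo_subset_Icc_self hx, ?_⟩
      refine Measure.ae_smul_measure ?_ _
      refine (ae_dirac_iff measurableSet_Icc).2 ?_
      exact ⟨le_rfl, hw.trans hwZ⟩)
  rw [hρ.mass, ← ENNReal.ofReal_mul hp] at s3
  have s4 := s1.trans (s3.trans (add_le_add s2 le_rfl))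
  have s5 := ENNReal.toReal_mono (ENNReal.add_ne_top.2 ⟨hne, ofReal_ne_top⟩) s4
  rw [ENNReal.toReal_add hne ofReal_ne_top, ENNReal.toReal_ofReal (mul_nonneg hp hpi),
    ← hσ.W2sq_eq, ← hρ.W2sq_eq] at s5
  exact s5

/-! ### Variation of the interface -/

/-- The density equal to `R` up to `a`, to `h` on `(a, Y]` and to `1` beyond `Y`. With `h = R` it
represents a given density with interface `Y`, with `h` constant it is the competitor. -/
def pwDensity (a Y : ℝ) (R h : ℝ → ℝ) (x : ℝ) : ℝ :=
  if x ≤ a then R x else if x ≤ Y then h x else 1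

section pwDensity

variable {a Y : ℝ} {R h : ℝ → ℝ}

theorem pwDensity_nice {C : ℝ} (hR : Continuous R) (hh : Continuous h) (hY : 0 < Y) (haY : a ≤ Y)
    (hR0 : ∀ x, 0 ≤ R x) (hh0 : ∀ x, 0 ≤ h x) (hRC : ∀ x, R x ≤ C) (hhC : ∀ x, h x ≤ C)
    (hC : 1 ≤ C) : NiceDensity (pwDensity a Y R h) Y C where
  pos := hY
  meas := Measurable.ite measurableSet_Iic hR.measurable
    (Measurable.ite measurableSet_Iic hh.measurable measurable_const)
  nonneg x := by unfold pwDensity; split_ifs <;> simp [hR0, hh0]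
  le x := by unfold pwDensity; split_ifs <;> simp [hRC, hhC, hC]
  one x hx := by
    unfold pwDensity
    rw [if_neg (not_le.2 (haY.trans_lt hx)), if_neg (not_le.2 hx)]

theorem pwDensity_locallyIntegrable {G : ℝ → ℝ} (hG : Continuous G) (hR : Continuous R)
    (hh : Continuous h) (haY : a ≤ Y) :
    LocallyIntegrable (fun x => G (pwDensity a Y R h x)) := by
  have e : (fun x => G (pwDensity a Y R h x)) = (Iic a).indicator (fun x => G (R x)) +
      (Ioc a Y).indicator (fun x => G (h x)) + (Ioi Y).indicator fun _ => G 1 := by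
    funext x
    simp only [Pi.add_apply, pwDensity, indicator, mem_Iic, mem_Ioc, mem_Ioi]
    by_cases h1 : x ≤ a
    · have h2 : ¬ Y < x := not_lt.2 (h1.trans haY)
      simp [h1, h2]
    · by_cases h2 : x ≤ Y
      · simp [h1, h2, not_le.1 h1, not_lt.2 h2]
      · simp [h1, h2, not_le.1 h2]
  rw [e]
  exact (((hG.comp hR).locallyIntegrable.indicator measurableSet_Iic).add
    ((hG.comp hh).locallyIntegrable.indicator measurableSet_Ioc)).add
    (continuous_const.locallyIntegrable.indicator measurableSet_Ioi)

theorem pwDensity_memAdm {C : ℝ} (hR : Continuous R) (hh : Continuous h) (haY : a ≤ Y)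
    (hn : NiceDensity (pwDensity a Y R h) Y C) : MemAdmSet Y (pwDensity a Y R h) :=
  ⟨⟨Eventually.of_forall fun x _ => hn.nonneg x,
    (pwDensity_locallyIntegrable continuous_id hR hh haY).locallyIntegrableOn _,
    (pwDensity_locallyIntegrable Real.continuous_mul_log hR hh haY).locallyIntegrableOn _,
    Y, hn.pos, Eventually.of_forall hn.one⟩, hn.xA_le⟩

theorem pwDensity_intervals {G : ℝ → ℝ} {u : ℝ} (hG : Continuous G)
    (hR : Continuous R) (hh : Continuous h) (hua : u ≤ a) (haY : a ≤ Y) :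
    ∫ x in Ioc u Y, G (pwDensity a Y R h x) =
      (∫ x in u..a, G (R x)) + ∫ x in a..Y, G (h x) := by
  have hloc := pwDensity_locallyIntegrable hG hR hh haY
  rw [← Ioc_union_Ioc_eq_Ioc hua haY, setIntegral_union (Ioc_disjoint_Ioc_of_le le_rfl)
    measurableSet_Ioc
    ((hloc.integrableOn_isCompact isCompact_Icc).mono_set Ioc_subset_Icc_self)
    ((hloc.integrableOn_isCompact isCompact_Icc).mono_set Ioc_subset_Icc_self),
    intervalIntegral.integral_of_le hua, intervalIntegral.integral_of_le haY]
  congr 1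
  · refine setIntegral_congr_fun measurableSet_Ioc fun x hx => ?_
    simp only [pwDensity, if_pos hx.2]
  · refine setIntegral_congr_fun measurableSet_Ioc fun x hx => ?_
    simp only [pwDensity, if_neg (not_le.2 hx.1), if_pos hx.2]

theorem pwDensity_integral_Ioi {G : ℝ → ℝ} (hG : Continuous G) (hG1 : G 1 = 0)
    (hR : Continuous R) (hh : Continuous h) (ha : 0 ≤ a) (haY : a ≤ Y) :
    ∫ x in Ioi (0 : ℝ), G (pwDensity a Y R h x) =
      (∫ x in (0 : ℝ)..a, G (R x)) + ∫ x in a..Y, G (h x) := by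
  rw [← pwDensity_intervals hG hR hh ha haY]
  refine setIntegral_eq_of_subset_of_forall_sdiff_eq_zero measurableSet_Ioi
    Ioc_subset_Ioi_self fun x hx => ?_
  have : Y < x := by
    by_contra hlt
    exact hx.2 ⟨hx.1, not_lt.1 hlt⟩
  simp only [pwDensity, if_neg (not_le.2 (haY.trans_lt this)), if_neg (not_le.2 this), hG1]

theorem pwDensity_window {Z : ℝ} (hR : Continuous R) (hh : Continuous h) (haY : a ≤ Y)
    (hYZ : Y ≤ Z) :
    ∫ x in Ioo a Z, pwDensity a Y R h x = (∫ x in a..Y, h x) + (Z - Y) := by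
  have hloc : LocallyIntegrable (pwDensity a Y R h) :=
    pwDensity_locallyIntegrable continuous_id hR hh haY
  rw [← integral_Ioc_eq_integral_Ioo, ← Ioc_union_Ioc_eq_Ioc haY hYZ,
    setIntegral_union (Ioc_disjoint_Ioc_of_le le_rfl) measurableSet_Ioc
    ((hloc.integrableOn_isCompact isCompact_Icc).mono_set Ioc_subset_Icc_self)
    ((hloc.integrableOn_isCompact isCompact_Icc).mono_set Ioc_subset_Icc_self)]
  have e1 := pwDensity_intervals continuous_id hR hh (le_refl a) haY
  simp only [id, intervalIntegral.integral_same, zero_add] at e1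
  rw [e1]
  congr 1
  have e2 : ∫ x in Ioc Y Z, pwDensity a Y R h x = ∫ x in Ioc Y Z, (1 : ℝ) := by
    refine setIntegral_congr_fun measurableSet_Ioc fun x hx => ?_
    simp only [pwDensity, if_neg (not_le.2 (haY.trans_lt hx.1)), if_neg (not_le.2 hx.1)]
  rw [e2]
  simp [hYZ]

theorem ae_eq_pwDensity {ρ : ℝ → ℝ} (haY : a ≤ Y) (h1 : ∀ᵐ x : ℝ, x ∈ Ioo 0 Y → ρ x = R x)
    (h2 : ∀ᵐ x : ℝ, Y < x → ρ x = 1) :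
    ρ =ᵐ[volume.restrict (Ioi 0)] pwDensity a Y R R := by
  rw [Filter.EventuallyEq, ae_restrict_iff' measurableSet_Ioi]
  have hne : ∀ᵐ x : ℝ, x ≠ Y := by simp [ae_iff]
  filter_upwards [h1, h2, hne] with x i1 i2 i3 hx
  rcases lt_or_gt_of_ne i3 with hlt | hlt
  · rw [i1 ⟨hx, hlt⟩]
    simp [pwDensity, hlt.le]
  · rw [i2 hlt]
    unfold pwDensity
    rw [if_neg (not_le.2 (haY.trans_lt hlt)), if_neg (not_le.2 hlt)]

end pwDensity

theorem continuous_fEnt (β : ℝ) : Continuous (fEnt β) := by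
  have : fEnt β = fun r => r * Real.log r - β * r + β := by
    funext r; unfold fEnt; ring
  rw [this]
  exact (Real.continuous_mul_log.sub (continuous_const.mul continuous_id)).add continuous_const

theorem fEnt_one (β : ℝ) : fEnt β 1 = 0 := by simp [fEnt]

/-- First variation before passing to the limit: move the interface from `X` to `Y`, replace the
density on `(a, Y)` by the constant `q` that preserves `𝐌`, and compare the functional. The
transport term is quadratic in the size of the window. -/
theorem variation {lam α β θ X0 τ mτ Kτ X C C0 : ℝ} {ρ ρ0 R R0 : ℝ → ℝ}
    (hτ0 : 0 < τ) (hX0 : 0 < X0) (hXX0 : X0 ≤ X)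
    (hR : Continuous R) (hR0 : ∀ x, 0 ≤ R x) (hRC : ∀ x, R x ≤ C) (hC : 1 ≤ C)
    (hS : Continuous R0) (hS0 : ∀ x, 0 ≤ R0 x) (hSC : ∀ x, R0 x ≤ C0) (hC0 : 1 ≤ C0)
    (h1 : ∀ᵐ x : ℝ, x ∈ Ioo 0 X → ρ x = R x) (h2 : ∀ᵐ x : ℝ, X < x → ρ x = 1)
    (i1 : ∀ᵐ x : ℝ, x ∈ Ioo 0 X0 → ρ0 x = R0 x) (i2 : ∀ᵐ x : ℝ, X0 < x → ρ0 x = 1)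
    (hmin : ∀ Y : ℝ, ∀ σ : ℝ → ℝ, MemAdmSet Y σ →
      Jfun lam α β θ τ Kτ mτ X0 ρ0 X ρ ≤ Jfun lam α β θ τ Kτ mτ X0 ρ0 Y σ)
    {a Y q : ℝ} (ha : 0 < a) (haX : a < X) (haY : a < Y) (hYX : Y ≤ X + 1) (hq : 0 ≤ q)
    (hqm : q * (Y - a) = (∫ x in a..X, R x) + (Y - X)) :
    0 ≤ 4 * (X + 1) * C * (max X Y - a) ^ 2 / (2 * τ)
      + lam * ((Y - X0) ^ 2 - (X - X0) ^ 2) / (2 * τ) - α * (Y - X)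
      + ((Y - a) * fEnt β q - ∫ x in a..X, fEnt β (R x)) := by
  set ρ1 := pwDensity a X R R with hρ1
  set ρ2 := pwDensity (X0 / 2) X0 R0 R0 with hρ2
  set σ := pwDensity a Y R (fun _ => q) with hσ
  have hcq : Continuous fun _ : ℝ => q := continuous_const
  have n1 : NiceDensity ρ1 X C :=
    pwDensity_nice hR hR (ha.trans haX) haX.le hR0 hR0 hRC hRC hC
  have n2 : NiceDensity ρ2 X0 C0 :=
    pwDensity_nice hS hS hX0 (by linarith) hS0 hS0 hSC hSC hC0
  have n3 : NiceDensity σ Y (max C q) :=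
    pwDensity_nice hR hcq (ha.trans haY) haY.le hR0 (fun _ => hq)
      (fun x => (hRC x).trans (le_max_left _ _)) (fun _ => le_max_right _ _)
      (hC.trans (le_max_left _ _))
  have e1 : ρ =ᵐ[volume.restrict (Ioi 0)] ρ1 := ae_eq_pwDensity haX.le h1 h2
  have e2 : ρ0 =ᵐ[volume.restrict (Ioi 0)] ρ2 := ae_eq_pwDensity (by linarith) i1 i2
  have hJ := hmin Y σ (pwDensity_memAdm hR hcq haY.le n3)
  rw [Jfun_congr e1 e2, Jfun_congr (EventuallyEq.refl _ σ) e2] at hJ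
  have hM : Mfun σ = Mfun ρ1 := by
    unfold Mfun
    have hc : Continuous fun r : ℝ => 1 - r := by fun_prop
    rw [hσ, hρ1, pwDensity_integral_Ioi hc (by simp) hR hcq ha.le haY.le,
      pwDensity_integral_Ioi hc (by simp) hR hR ha.le haX.le]
    rw [intervalIntegral.integral_sub (a := a) (b := X) (by simp) (hR.intervalIntegrable _ _)]
    simp only [intervalIntegral.integral_const, smul_eq_mul]
    linarith
  set Z := max X Y with hZ
  have hXZ : X ≤ Z := le_max_left _ _
  have hYZ : Y ≤ Z := le_max_right _ _
  have hZ1 : Z ≤ X + 1 := max_le (by linarith) hYX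
  have hW := W2sq_window n1 n3 n2 hM ha.le (haX.le.trans hXZ) (n1.xA_le.trans hXZ)
    (n3.xA_le.trans hYZ) (n2.xA_le.trans (hXX0.trans hXZ))
    (fun x hx => by simp [hσ, hρ1, pwDensity, hx])
    (by
      rw [hσ, hρ1, pwDensity_window hR hcq haY.le hYZ, pwDensity_window hR hR haX.le hXZ]
      simp only [intervalIntegral.integral_const, smul_eq_mul]
      linarith)
  have hwin : ∫ x in Ioo a Z, ρ1 x ≤ C * (Z - a) := by
    have hb : ∫ x in Ioo a Z, ρ1 x ≤ ∫ x in Ioo a Z, C :=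
      setIntegral_mono (n1.integrableOn a Z) (integrableOn_const (by simp)) n1.le
    refine hb.trans (le_of_eq ?_)
    have : a ≤ Z := haX.le.trans hXZ
    simp [this, mul_comm]
  have hWle : 4 * Z * (Z - a) * ∫ x in Ioo a Z, ρ1 x ≤ 4 * (X + 1) * C * (Z - a) ^ 2 := by
    have p0 : 0 ≤ Z - a := by linarith
    have p1 : 4 * Z * (Z - a) * ∫ x in Ioo a Z, ρ1 x ≤ 4 * Z * (Z - a) * (C * (Z - a)) :=
      mul_le_mul_of_nonneg_left hwin (mul_nonneg (by linarith) p0)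
    have p2 : Z * (C * (Z - a) ^ 2) ≤ (X + 1) * (C * (Z - a) ^ 2) :=
      mul_le_mul_of_nonneg_right hZ1 (by positivity)
    nlinarith
  have hE : (∫ x in Ioi (0 : ℝ), fEnt β (σ x)) - ∫ x in Ioi (0 : ℝ), fEnt β (ρ1 x) =
      (Y - a) * fEnt β q - ∫ x in a..X, fEnt β (R x) := by
    rw [hσ, hρ1, pwDensity_integral_Ioi (continuous_fEnt β) (fEnt_one β) hR hcq ha.le haY.le,
      pwDensity_integral_Ioi (continuous_fEnt β) (fEnt_one β) hR hR ha.le haX.le]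
    simp only [intervalIntegral.integral_const, smul_eq_mul]
    ring
  have hMd : Mdiff σ ρ2 = Mdiff ρ1 ρ2 := by unfold Mdiff; rw [hM]
  unfold Jfun dsq Efun at hJ
  rw [hMd] at hJ
  have hW2 : W2sq σ ρ2 / (2 * τ) ≤ (W2sq ρ1 ρ2 + 4 * (X + 1) * C * (Z - a) ^ 2) / (2 * τ) := by
    gcongr
    linarith
  rw [add_div] at hW2 hJ
  rw [add_div] at hJ
  have : lam * ((Y - X0) ^ 2 - (X - X0) ^ 2) / (2 * τ) =
    lam * (Y - X0) ^ 2 / (2 * τ) - lam * (X - X0) ^ 2 / (2 * τ) := by ring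
  linarith

/-- Averages over the window `(X - ε, X)` tend to the value at `X`. -/
theorem tendsto_avg_left {g : ℝ → ℝ} (hg : Continuous g) (X : ℝ) :
    Tendsto (fun ε : ℝ => ε⁻¹ * ∫ x in (X - ε)..X, g x) (𝓝[>] 0) (𝓝 (g X)) := by
  have hd : HasDerivAt (fun u => ∫ x in X..u, g x) (g X) X :=
    intervalIntegral.integral_hasDerivAt_right (hg.intervalIntegrable _ _)
      hg.stronglyMeasurable.stronglyMeasurableAtFilter hg.continuousAt
  have h1 := hd.tendsto_slope_zero_left
  have h2 : Tendsto (fun ε : ℝ => -ε) (𝓝[>] 0) (𝓝[<] 0) := by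
    have := tendsto_neg_nhdsGT (a := (0 : ℝ))
    simpa using this
  refine (h1.comp h2).congr fun ε => ?_
  simp only [Function.comp, intervalIntegral.integral_same, sub_zero, smul_eq_mul]
  rw [← sub_eq_add_neg, intervalIntegral.integral_symm, inv_neg]
  ring

/-- The limit of `variation`, divided by `ε`, for the window `(X - ε, X)` and the interface moved to
`X + s ε`. The quadratic transport term disappears and the constant density `Q ε` on the modified
window, fixed by mass conservation, tends to `(R X + s) / (1 + s)`. -/
theorem limit_variation {lam α β X0 τ X D : ℝ} {R : ℝ → ℝ} (hR : Continuous R)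
    (hX : 0 < X)
    (hvar : ∀ a Y q : ℝ, 0 < a → a < X → a < Y → Y ≤ X + 1 → 0 ≤ q →
      q * (Y - a) = (∫ x in a..X, R x) + (Y - X) →
      0 ≤ D * (max X Y - a) ^ 2 / (2 * τ)
      + lam * ((Y - X0) ^ 2 - (X - X0) ^ 2) / (2 * τ) - α * (Y - X)
      + ((Y - a) * fEnt β q - ∫ x in a..X, fEnt β (R x)))
    {s : ℝ} (hs : -1 < s) (hrs : 0 < R X + s) :
    0 ≤ s * (lam * (X - X0) / τ - α)
      + ((1 + s) * fEnt β ((R X + s) / (1 + s)) - fEnt β (R X)) := by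
  have hs1 : 0 < 1 + s := by linarith
  set Q : ℝ → ℝ := fun ε => (ε⁻¹ * (∫ x in (X - ε)..X, R x) + s) / (1 + s) with hQ
  have tQ : Tendsto Q (𝓝[>] 0) (𝓝 ((R X + s) / (1 + s))) :=
    ((tendsto_avg_left hR X).add_const s).div_const _
  have tε : Tendsto (fun ε : ℝ => ε) (𝓝[>] 0) (𝓝 0) := tendsto_nhdsWithin_of_tendsto_nhds tendsto_id
  have tF : Tendsto (fun ε : ℝ => ε * (D * (max 0 s + 1) ^ 2 / (2 * τ))
      + (s * (lam * (X - X0) / τ - α) + ε * (lam * s ^ 2 / (2 * τ)))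
      + ((1 + s) * fEnt β (Q ε) - ε⁻¹ * ∫ x in (X - ε)..X, fEnt β (R x))) (𝓝[>] 0)
      (𝓝 (0 * (D * (max 0 s + 1) ^ 2 / (2 * τ))
      + (s * (lam * (X - X0) / τ - α) + 0 * (lam * s ^ 2 / (2 * τ)))
      + ((1 + s) * fEnt β ((R X + s) / (1 + s)) - fEnt β (R X)))) := by
    refine ((tε.mul_const _).add (tendsto_const_nhds.add (tε.mul_const _))).add ?_
    exact ((((continuous_fEnt β).tendsto _).comp tQ).const_mul _).sub
      (tendsto_avg_left ((continuous_fEnt β).comp hR) X)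
  have hfin : 0 ≤ 0 * (D * (max 0 s + 1) ^ 2 / (2 * τ))
      + (s * (lam * (X - X0) / τ - α) + 0 * (lam * s ^ 2 / (2 * τ)))
      + ((1 + s) * fEnt β ((R X + s) / (1 + s)) - fEnt β (R X)) := by
    refine ge_of_tendsto tF ?_
    have ev1 : ∀ᶠ ε in 𝓝[>] (0 : ℝ), 0 < Q ε := tQ.eventually_const_lt (by positivity)
    have ev2 : ∀ᶠ ε in 𝓝[>] (0 : ℝ), ε < X := tε.eventually_lt_const hX
    have ev3 : ∀ᶠ ε in 𝓝[>] (0 : ℝ), s * ε < 1 := by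
      have : Tendsto (fun ε : ℝ => s * ε) (𝓝[>] 0) (𝓝 (s * 0)) := tε.const_mul s
      rw [mul_zero] at this
      exact this.eventually_lt_const one_pos
    filter_upwards [ev1, ev2, ev3, self_mem_nhdsWithin] with ε j1 j2 j3 (j4 : 0 < ε)
    have hv := hvar (X - ε) (X + s * ε) (Q ε) (by linarith) (by linarith)
      (by nlinarith) (by linarith) j1.le (by
        simp only [hQ]
        have : X + s * ε - (X - ε) = (1 + s) * ε := by ring
        rw [this]
        field_simp
        ring)
    have hmax : max X (X + s * ε) - (X - ε) = ε * (max 0 s + 1) := by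
      rcases le_total 0 s with h0 | h0
      · rw [max_eq_right h0, max_eq_right (by nlinarith)]; ring
      · rw [max_eq_left h0, max_eq_left (by nlinarith)]; ring
    rw [hmax] at hv
    have := mul_nonneg (inv_pos.2 j4).le hv
    refine this.trans (le_of_eq ?_)
    have e1 : ε⁻¹ * (D * (ε * (max 0 s + 1)) ^ 2 / (2 * τ)) =
        ε * (D * (max 0 s + 1) ^ 2 / (2 * τ)) := by
      rw [mul_pow]
      have : ε⁻¹ * ε ^ 2 = ε := by field_simp
      linear_combination (D * (max 0 s + 1) ^ 2 / (2 * τ)) * this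
    have e2 : ε⁻¹ * (lam * ((X + s * ε - X0) ^ 2 - (X - X0) ^ 2) / (2 * τ)) =
        s * (lam * (X - X0) / τ) + ε * (lam * s ^ 2 / (2 * τ)) := by
      have i1 : ε⁻¹ * ((X + s * ε - X0) ^ 2 - (X - X0) ^ 2) =
        2 * s * (X - X0) + ε * s ^ 2 := by field_simp; ring
      linear_combination (lam / (2 * τ)) * i1
    have e3 : ε⁻¹ * (α * (X + s * ε - X)) = s * α := by field_simp; ring
    have e4 : ε⁻¹ * ((X + s * ε - (X - ε)) * fEnt β (Q ε)) = (1 + s) * fEnt β (Q ε) := by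
      field_simp; ring
    linear_combination e1 + e2 - e3 + e4
  linarith

/-- The limiting inequality is an equality at `s = 0`, so the derivative in `s` vanishes there; this is
the Euler–Lagrange equation. Since `r ln r` has slope `-∞` at `0`, it also excludes a vanishing
boundary density `r`. -/
theorem stationary_of_limit {A β r : ℝ} (hr : 0 ≤ r)
    (h : ∀ s : ℝ, -1 < s → 0 < r + s →
      0 ≤ s * A + ((1 + s) * fEnt β ((r + s) / (1 + s)) - fEnt β r)) :
    0 < r ∧ A + Real.log r + 1 - r = 0 := by
  have hpos : 0 < r := by
    rcases hr.eq_or_lt with h0 | h0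
    · exfalso
      subst h0
      -- At `r = 0` the entropy gains `s ln s` against a linear loss, so a small `s` contradicts `h`.
      set s := Real.exp (-A - 1) with hs
      have hs0 : 0 < s := Real.exp_pos _
      have h' := h s (by linarith) (by linarith)
      have e : (1 + s) * fEnt β ((0 + s) / (1 + s)) - fEnt β 0 =
          s * Real.log (s / (1 + s)) := by
        unfold fEnt
        simp only [zero_add, zero_mul]
        field_simp
        ring
      rw [e, ← mul_add] at h'
      have h2 : 0 ≤ A + Real.log (s / (1 + s)) := nonneg_of_mul_nonneg_right h' hs0
      have h3 : Real.log (s / (1 + s)) ≤ Real.log s :=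
        Real.log_le_log (by positivity) (div_le_self hs0.le (by linarith))
      rw [hs, Real.log_exp, ← hs] at h3
      linarith
    · exact h0
  refine ⟨hpos, ?_⟩
  set H : ℝ → ℝ := fun s => s * A + ((1 + s) * fEnt β ((r + s) / (1 + s)) - fEnt β r) with hH
  have hH0 : H 0 = 0 := by simp [hH]
  have hmin : IsLocalMin H 0 := by
    have : Ioi (max (-1) (-r)) ∈ 𝓝 (0 : ℝ) := Ioi_mem_nhds (by simp [hpos])
    filter_upwards [this] with s hs
    rw [hH0]
    have h1 := (le_max_left (-1) (-r)).trans_lt hs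
    have h2 := (le_max_right (-1) (-r)).trans_lt hs
    exact h s h1 (by linarith)
  have hf : HasDerivAt (fEnt β) (1 * (Real.log r - β) + r * r⁻¹) r :=
    (((hasDerivAt_id r).mul ((Real.hasDerivAt_log hpos.ne').sub_const β)).add_const β)
  have hq : HasDerivAt (fun s : ℝ => (r + s) / (1 + s)) (1 - r) 0 := by
    have := ((hasDerivAt_id (0 : ℝ)).const_add r).div ((hasDerivAt_id (0 : ℝ)).const_add 1)
      (by simp)
    exact this.congr_deriv (by simp)
  have hfq : HasDerivAt (fun s : ℝ => fEnt β ((r + s) / (1 + s)))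
      ((1 * (Real.log r - β) + r * r⁻¹) * (1 - r)) 0 :=
    HasDerivAt.comp (h₂ := fEnt β) (h := fun s : ℝ => (r + s) / (1 + s)) 0 (by simpa using hf) hq
  have hd : HasDerivAt H (1 * A + (1 * fEnt β ((r + 0) / (1 + 0)) +
      (1 + 0) * ((1 * (Real.log r - β) + r * r⁻¹) * (1 - r)))) 0 :=
    ((hasDerivAt_id (0 : ℝ)).mul_const A).add
      ((((hasDerivAt_id (0 : ℝ)).const_add 1).mul hfq).sub_const _)
  have := hmin.hasDerivAt_eq_zero hd
  simp only [add_zero, div_one, mul_inv_cancel₀ hpos.ne', fEnt] at this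
  linarith

/-- A function continuous on `[0, X]` has a continuous, bounded, nonnegative extension of its
positive part. -/
theorem exists_extension {g : ℝ → ℝ} {X : ℝ} (hX : 0 ≤ X) (hg : ContinuousOn g (Icc 0 X)) :
    ∃ (R : ℝ → ℝ) (C : ℝ), Continuous R ∧ (∀ x, 0 ≤ R x) ∧ (∀ x, R x ≤ C) ∧ 1 ≤ C ∧
      ∀ x ∈ Icc 0 X, R x = max (g x) 0 := by
  obtain ⟨C, hC⟩ := isCompact_Icc.exists_bound_of_continuousOn hg
  refine ⟨fun x => max (IccExtend hX ((Icc 0 X).domRestrict g) x) 0, max C 1, ?_,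
    fun x => le_max_right _ _, fun x => ?_, le_max_right _ _, fun x hx => ?_⟩
  · exact (continuousOn_iff_continuous_domRestrict.1 hg).Icc_extend'.max continuous_const
  · refine max_le ?_ (zero_le_one.trans (le_max_right _ _))
    refine le_trans ?_ (le_max_left _ _)
    exact (le_abs_self _).trans (hC _ (projIcc 0 X hX x).2)
  · simp only [IccExtend_of_mem hX _ hx, domRestrict_apply]

/-- Proposition 3.8, Euler–Lagrange equation for the free interface.
Let `(X, ρ)` be a minimizer of the JKO functional with `X ≥ X⁰` and let `ρ̄` be the
continuous representative of `ρ` on `[0,X]`. Then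
`λ (X − X⁰)/τ = α − (1 − ρ̄(X)) − ln ρ̄(X)`. -/
theorem euler_lagrange_free_interface
    (lam α β θ T X0 ρmin ρmax τ mτ Kτ : ℝ) (ρ0 ρ0' : ℝ → ℝ)
    (hlam : 0 < lam) (hα : 0 < α) (hθ : 0 < θ) (hβθ : β + θ < 1) (hT : 0 < T)
    (hH2 : H2 β θ X0 ρmin ρmax ρ0 ρ0')
    (hτ0 : 0 < τ) (hτ1 : τ < 1) (hmτ : 0 < mτ) (hKτ : 0 < Kτ)
    (X : ℝ) (ρ ρb : ℝ → ℝ)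
    (hmin : IsJKOMin lam α β θ τ Kτ mτ X0 ρ0 X ρ) (hXX0 : X0 ≤ X)
    (hrep : ContRep X ρ ρb) :
    lam * (X - X0) / τ = α - (1 - ρb X) - Real.log (ρb X) := by
  obtain ⟨hX0, hpos0, hder0, -, hone0, -⟩ := hH2
  obtain ⟨⟨⟨hnn, -, -, B, hB, hB1⟩, hxA⟩, hmin⟩ := hmin
  have hX : 0 < X := hX0.trans_le hXX0
  obtain ⟨R, C, hR, hR0, hRC, hC, hRe⟩ := exists_extension hX.le hrep.1
  obtain ⟨R0, C0, hS, hS0, hSC, hC0, hSe⟩ :=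
    exists_extension hX0.le fun x hx => (hder0 x hx).continuousWithinAt
  have h1 : ∀ᵐ x : ℝ, x ∈ Ioo 0 X → ρ x = R x := by
    filter_upwards [hrep.2, hnn] with x k1 k2 hx
    rw [hRe x (Ioo_subset_Icc_self hx), ← k1 hx, max_eq_left (k2 hx.1)]
  have h2 : ∀ᵐ x : ℝ, X < x → ρ x = 1 := by
    filter_upwards [ae_one_of_xA hB hB1] with x k hx
    exact k (hxA.trans_lt hx)
  have i1 : ∀ᵐ x : ℝ, x ∈ Ioo 0 X0 → ρ0 x = R0 x := Eventually.of_forall fun x hx => by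
    rw [hSe x (Ioo_subset_Icc_self hx), max_eq_left (hpos0 x).le]
  have hs := stationary_of_limit (A := lam * (X - X0) / τ - α) (β := β) (hR0 X)
    fun s hs hrs => limit_variation (D := 4 * (X + 1) * C) hR hX
      (fun a Y q q1 q2 q3 q4 q5 q6 => variation hτ0 hX0 hXX0 hR hR0 hRC hC hS hS0 hSC hC0 h1 h2
        i1 (Eventually.of_forall hone0) hmin q1 q2 q3 q4 q5 q6) hs hrs
  have hRX : R X = ρb X := by
    have := hRe X ⟨hX.le, le_rfl⟩
    rcases max_choice (ρb X) 0 with h | h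
    · rw [this, h]
    · rw [h] at this
      exact absurd this hs.1.ne'
  rw [hRX] at hs
  linarith [hs.2]

end
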